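/- arXiv:1709.08265 — 5 statements merged into one kernel-verified Lean document; each statement's English description precedes it below -/
import Mathlib

section
/- Let C be a group system and ℓ ≥ 0 an integer. Then C is ℓ-controllable if and only if for every t ∈ ℤ the set product C^{(t+ℓ)−}·C^{t+} equals all of C. -/
open scoped Pointwise

namespace GroupSystemPaper

variable {A : ℤ → Type*} [∀ t, Group (A t)]

/-- `C^{t+}` : codewords of the group system `C` that are the identity before time `t`. -/
def Cplus (C : Subgroup (∀ t, A t)) (t : ℤ) : Subgroup C where
  carrier := {a | ∀ n < t, (a : ∀ s, A s) n = 1}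
  one_mem' := by intro n hn; simp
  mul_mem' := by intro a b ha hb n hn; simp [ha n hn, hb n hn]
  inv_mem' := by intro a ha n hn; simp [ha n hn]

/-- `C^{t−}` : codewords of the group system `C` that are the identity from time `t` on. -/
def Cminus (C : Subgroup (∀ t, A t)) (t : ℤ) : Subgroup C where
  carrier := {a | ∀ n, t ≤ n → (a : ∀ s, A s) n = 1}
  one_mem' := by intro n hn; simp
  mul_mem' := by intro a b ha hb n hn; simp [ha n hn, hb n hn]
  inv_mem' := by intro a ha n hn; simp [ha n hn]

/-- `C^{[t₁,t₂]}` : codewords supported on the interval `[t₁, t₂]`. -/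
def Cint (C : Subgroup (∀ t, A t)) (t₁ t₂ : ℤ) : Subgroup C :=
  Cplus C t₁ ⊓ Cminus C (t₂ + 1)

instance Cplus_normal (C : Subgroup (∀ t, A t)) (t : ℤ) : (Cplus C t).Normal := by
  constructor
  intro x hx g n hn
  have h1 : (x : ∀ s, A s) n = 1 := hx n hn
  simp [h1]

instance Cminus_normal (C : Subgroup (∀ t, A t)) (t : ℤ) : (Cminus C t).Normal := by
  constructor
  intro x hx g n hn
  have h1 : (x : ∀ s, A s) n = 1 := hx n hn
  simp [h1]

instance Cint_normal (C : Subgroup (∀ t, A t)) (t₁ t₂ : ℤ) : (Cint C t₁ t₂).Normal := by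
  constructor
  intro x hx g
  rcases Subgroup.mem_inf.mp hx with ⟨h1, h2⟩
  exact Subgroup.mem_inf.mpr
    ⟨(Cplus_normal C t₁).conj_mem _ h1 g, (Cminus_normal C (t₂ + 1)).conj_mem _ h2 g⟩

/-- The normal subgroup `C^{t−}C^{t+}` of `C`. -/
def stateN (C : Subgroup (∀ t, A t)) (t : ℤ) : Subgroup C :=
  Cminus C t ⊔ Cplus C t

instance stateN_normal (C : Subgroup (∀ t, A t)) (t : ℤ) : (stateN C t).Normal :=
  Subgroup.sup_normal _ _

/-- The canonical state space `Σ^t = C/(C^{t−}C^{t+})`. -/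
abbrev State (C : Subgroup (∀ t, A t)) (t : ℤ) : Type _ :=
  ↥C ⧸ stateN C t

/-- The state projection `σ^t : C → Σ^t`. -/
def sigma (C : Subgroup (∀ t, A t)) (t : ℤ) : ↥C →* State C t :=
  QuotientGroup.mk' (stateN C t)

/-- The evaluation homomorphism `χ^t : C → A^t`. -/
def evalHom (C : Subgroup (∀ t, A t)) (t : ℤ) : ↥C →* A t :=
  (Pi.evalMonoidHom A t).comp C.subtype

/-- The branch homomorphism `β^t : C → Σ^t × A^t × Σ^{t+1}`. -/
def beta (C : Subgroup (∀ t, A t)) (t : ℤ) :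
    ↥C →* State C t × A t × State C (t + 1) :=
  (sigma C t).prod ((evalHom C t).prod (sigma C (t + 1)))

/-- The branch group `B^t = β^t(C)`. -/
def Branch (C : Subgroup (∀ t, A t)) (t : ℤ) :
    Subgroup (State C t × A t × State C (t + 1)) :=
  (beta C t).range

/-- `β^t` with codomain restricted to the branch group `B^t`. -/
def betaRes (C : Subgroup (∀ t, A t)) (t : ℤ) : ↥C →* ↥(Branch C t) :=
  (beta C t).rangeRestrict

/-- `X_j^t = β^t(C^{(t−j)+})` as a subgroup of the branch group `B^t`. -/
def X (C : Subgroup (∀ t, A t)) (j t : ℤ) : Subgroup ↥(Branch C t) :=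
  (Cplus C (t - j)).map (betaRes C t)

/-- `Y_i^t = β^t(C^{(t+i+1)−})` as a subgroup of the branch group `B^t`. -/
def Y (C : Subgroup (∀ t, A t)) (i t : ℤ) : Subgroup ↥(Branch C t) :=
  (Cminus C (t + i + 1)).map (betaRes C t)

instance X_normal (C : Subgroup (∀ t, A t)) (j t : ℤ) : (X C j t).Normal :=
  (Cplus_normal C (t - j)).map _ (MonoidHom.rangeRestrict_surjective _)

instance Y_normal (C : Subgroup (∀ t, A t)) (i t : ℤ) : (Y C i t).Normal :=
  (Cminus_normal C (t + i + 1)).map _ (MonoidHom.rangeRestrict_surjective _)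

/-- `Δ_k^t = X_0^t ∩ Y_k^t`. -/
def Del (C : Subgroup (∀ t, A t)) (k t : ℤ) : Subgroup ↥(Branch C t) :=
  X C 0 t ⊓ Y C k t

/-- `D_k^t = {a ∈ C : β^t(a) ∈ Δ_k^t}`. -/
def D (C : Subgroup (∀ t, A t)) (k t : ℤ) : Subgroup ↥C :=
  (Del C k t).comap (betaRes C t)

/-- Following-branch operator: for `S ⊆ B^{t₁}`,
`FSet C t₁ t₂ S = {β^{t₂}(a) : a ∈ C, β^{t₁}(a) ∈ S}`. -/
def FSet (C : Subgroup (∀ t, A t)) (t₁ t₂ : ℤ) (S : Set ↥(Branch C t₁)) :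
    Set ↥(Branch C t₂) :=
  {x | ∃ a : ↥C, betaRes C t₁ a ∈ S ∧ betaRes C t₂ a = x}

/-- `π^{[t,t+k]} : C → B^t × ⋯ × B^{t+k}`, `a ↦ (β^t(a), …, β^{t+k}(a))`. -/
def piSeg (C : Subgroup (∀ t, A t)) (t : ℤ) (k : ℕ) :
    ↥C →* ∀ j : Fin (k + 1), ↥(Branch C (t + ((j : ℕ) : ℤ))) where
  toFun a := fun j => betaRes C (t + ((j : ℕ) : ℤ)) a
  map_one' := by funext j; simp
  map_mul' a b := by funext j; simp

/-- `π^{[t,t+k]}(D_m^t)`. -/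
def Pseg (C : Subgroup (∀ t, A t)) (t : ℤ) (k : ℕ) (m : ℤ) :
    Subgroup (∀ j : Fin (k + 1), ↥(Branch C (t + ((j : ℕ) : ℤ)))) :=
  (D C m t).map (piSeg C t k)

/-- `β^{t+j}(D_m^t)` : the image of `D_m^t` in the branch group at time `t + j`. -/
def Qb (C : Subgroup (∀ t, A t)) (t m j : ℤ) : Subgroup ↥(Branch C (t + j)) :=
  (D C m t).map (betaRes C (t + j))

/-- The normal subgroup `C^{[t,t+k−1]}C^{[t+1,t+k]}` of `C` (denominator of the granule). -/
def granN (C : Subgroup (∀ t, A t)) (t : ℤ) (k : ℕ) : Subgroup ↥C :=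
  Cint C t (t + k - 1) ⊔ Cint C (t + 1) (t + k)

instance granN_normal (C : Subgroup (∀ t, A t)) (t : ℤ) (k : ℕ) : (granN C t k).Normal :=
  Subgroup.sup_normal _ _

lemma mem_D_of_mem_Cint (C : Subgroup (∀ t, A t)) (t : ℤ) (k : ℕ) {a : ↥C}
    (ha : a ∈ Cint C t (t + k)) : a ∈ D C (k : ℤ) t := by
  rcases Subgroup.mem_inf.mp ha with ⟨h1, h2⟩
  refine Subgroup.mem_comap.mpr (Subgroup.mem_inf.mpr ⟨?_, ?_⟩)
  · exact Subgroup.mem_map.mpr ⟨a, by simpa using h1, rfl⟩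
  · exact Subgroup.mem_map.mpr ⟨a, h2, rfl⟩

/-- `ℓ`-controllability of the group system `C`. -/
def Controllable (C : Subgroup (∀ t, A t)) (ℓ : ℕ) : Prop :=
  ∀ a b : ↥C, ∀ t : ℤ, ∃ c : ↥C,
    (∀ n < t, (c : ∀ s, A s) n = (a : ∀ s, A s) n) ∧
    (∀ n, t + (ℓ : ℤ) ≤ n → (c : ∀ s, A s) n = (b : ∀ s, A s) n)


/-- The right-hand side says that any right cosets `K a` and `H b` meet, i.e. `b * a⁻¹ ∈ H K`. -/
lemma coe_mul_coe_eq_univ_iff_exists_mul_inv_mem {G : Type*} [Group G] (H K : Subgroup G) :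
    (H : Set G) * (K : Set G) = Set.univ ↔
      ∀ a b : G, ∃ c : G, c * a⁻¹ ∈ K ∧ c * b⁻¹ ∈ H := by
  constructor
  · intro hHK a b
    obtain ⟨h, hh, k, hk, hba : h * k = b * a⁻¹⟩ : b * a⁻¹ ∈ (H : Set G) * (K : Set G) :=
      hHK ▸ Set.mem_univ _
    have hcb : k * a * b⁻¹ = h⁻¹ := calc
      k * a * b⁻¹ = k * (b * a⁻¹)⁻¹ := by group
      _ = k * (h * k)⁻¹ := by rw [hba]
      _ = h⁻¹ := by group
    exact ⟨k * a, by simpa using hk, hcb ▸ H.inv_mem hh⟩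
  · intro hmeet
    refine Set.eq_univ_of_forall fun g ↦ ?_
    obtain ⟨c, hcK, hcH⟩ := hmeet 1 g
    exact ⟨(c * g⁻¹)⁻¹, H.inv_mem hcH, c, by simpa using hcK, by group⟩

lemma mul_inv_mem_Cplus_iff (C : Subgroup (∀ t, A t)) (t : ℤ) (a b : C) :
    a * b⁻¹ ∈ Cplus C t ↔ ∀ n < t, (a : ∀ s, A s) n = (b : ∀ s, A s) n :=
  forall₂_congr fun _ _ ↦ mul_inv_eq_one

lemma mul_inv_mem_Cminus_iff (C : Subgroup (∀ t, A t)) (t : ℤ) (a b : C) :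
    a * b⁻¹ ∈ Cminus C t ↔ ∀ n, t ≤ n → (a : ∀ s, A s) n = (b : ∀ s, A s) n :=
  forall₂_congr fun _ _ ↦ mul_inv_eq_one

theorem statement1_general (C : Subgroup (∀ t, A t)) (t u : ℤ) :
    (∀ a b : C, ∃ c : C,
      (∀ n < t, (c : ∀ s, A s) n = (a : ∀ s, A s) n) ∧
      (∀ n, u ≤ n → (c : ∀ s, A s) n = (b : ∀ s, A s) n)) ↔
    (Cminus C u : Set C) * (Cplus C t : Set C) = Set.univ := by
  simp only [coe_mul_coe_eq_univ_iff_exists_mul_inv_mem, mul_inv_mem_Cplus_iff,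
    mul_inv_mem_Cminus_iff]

/-- `C` is `ℓ`-controllable iff for every `t ∈ ℤ` the set product
`C^{(t+ℓ)−}·C^{t+}` equals all of `C`. -/
theorem statement1 (C : Subgroup (∀ t, A t)) (ℓ : ℕ) :
    Controllable C ℓ ↔
      ∀ t : ℤ, (Cminus C (t + (ℓ : ℤ)) : Set ↥C) * (Cplus C t : Set ↥C) = Set.univ :=
  ⟨fun hC t ↦ (statement1_general C t (t + ℓ)).mp fun a b ↦ hC a b t,
    fun hC a b t ↦ (statement1_general C t (t + ℓ)).mpr (hC t) a b⟩

end GroupSystemPaper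
end

section
/- Let C be a group system and ℓ ≥ 0 an integer. The following are equivalent: (i) C is ℓ-controllable; (ii) X_ℓ^t = B^t for every t ∈ ℤ; (iii) Y_ℓ^t = B^t for every t ∈ ℤ. -/
/-!
A codeword `c` agreeing with `a` before `t` and with `b` from `t + ℓ` on is the same thing as a
factorization `a b⁻¹ = (c b⁻¹)(b c⁻¹ a b⁻¹)` in `C^{(t+ℓ)−} C^{t+}`, so `ℓ`-controllability says
that `C^{(t+ℓ)−} C^{t+} = C` for every `t`. On the other side `β^t` has kernel `C^{t−} C^{(t+1)+}`
by the modular law, so `X_ℓ^t = B^t` means `C^{t−} C^{(t−ℓ)+} = C` and `Y_ℓ^t = B^t` means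
`C^{(t+ℓ+1)−} C^{(t+1)+} = C`. These are the same condition at shifted times.
-/

open scoped Pointwise

namespace GroupSystemPaper

variable {A : ℤ → Type*} [∀ t, Group (A t)]

lemma sup_inf_assoc_of_normal_of_le {G : Type*} [Group G] {H : Subgroup G} [H.Normal]
    (K : Subgroup G) {L : Subgroup G} (h : H ≤ L) : (H ⊔ K) ⊓ L = H ⊔ K ⊓ L :=
  SetLike.coe_injective <| by
    rw [Subgroup.coe_inf, Subgroup.normal_mul, Subgroup.normal_mul, Subgroup.mul_inf_assoc H K L h]

section

variable (C : Subgroup (∀ t, A t))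

lemma Cplus_antitone : Antitone (Cplus C) :=
  fun _ _ hst _ ha n hn => ha n (hn.trans_le hst)

lemma Cminus_monotone : Monotone (Cminus C) :=
  fun _ _ hst _ ha n hn => ha n (hst.trans hn)

lemma Cminus_le_ker_evalHom (t : ℤ) : Cminus C t ≤ (evalHom C t).ker :=
  fun _ ha => ha t le_rfl

lemma Cplus_inf_ker_evalHom (t : ℤ) : Cplus C t ⊓ (evalHom C t).ker = Cplus C (t + 1) := by
  ext a
  constructor
  · rintro ⟨hlt, heq⟩ n hn
    rcases (Int.lt_add_one_iff.mp hn).lt_or_eq with h | rfl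
    exacts [hlt n h, heq]
  · exact fun ha => ⟨Cplus_antitone C (Int.le_add_one le_rfl) ha, ha t (lt_add_one t)⟩

lemma stateN_inf_ker_evalHom (t : ℤ) :
    stateN C t ⊓ (evalHom C t).ker = Cminus C t ⊔ Cplus C (t + 1) := by
  rw [stateN, sup_inf_assoc_of_normal_of_le _ (Cminus_le_ker_evalHom C t), Cplus_inf_ker_evalHom]

lemma ker_beta (t : ℤ) : (beta C t).ker = Cminus C t ⊔ Cplus C (t + 1) := by
  have hle : Cminus C t ⊔ Cplus C (t + 1) ≤ stateN C (t + 1) :=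
    sup_le_sup_right (Cminus_monotone C (Int.le_add_one le_rfl)) _
  calc (beta C t).ker
      = (sigma C t).ker ⊓ ((evalHom C t).ker ⊓ (sigma C (t + 1)).ker) := by
        rw [beta, MonoidHom.ker_prod, MonoidHom.ker_prod]
    _ = stateN C t ⊓ (evalHom C t).ker ⊓ stateN C (t + 1) := by
        rw [sigma, sigma, QuotientGroup.ker_mk', QuotientGroup.ker_mk', inf_assoc]
    _ = Cminus C t ⊔ Cplus C (t + 1) := by
        rw [stateN_inf_ker_evalHom, inf_eq_left.mpr hle]

lemma ker_betaRes (t : ℤ) : (betaRes C t).ker = Cminus C t ⊔ Cplus C (t + 1) :=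
  (MonoidHom.ker_rangeRestrict (beta C t)).trans (ker_beta C t)

lemma map_betaRes_eq_top_iff (t : ℤ) (H : Subgroup C) :
    H.map (betaRes C t) = ⊤ ↔ H ⊔ (Cminus C t ⊔ Cplus C (t + 1)) = ⊤ := by
  have hrange : (betaRes C t).range = ⊤ :=
    MonoidHom.range_eq_top.mpr (MonoidHom.rangeRestrict_surjective _)
  rw [← hrange, Subgroup.map_eq_range_iff, ker_betaRes, codisjoint_iff]

lemma X_eq_top_iff {j : ℤ} (hj : -1 ≤ j) (t : ℤ) :
    X C j t = ⊤ ↔ Cminus C t ⊔ Cplus C (t - j) = ⊤ := by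
  have hle : Cplus C (t + 1) ≤ Cplus C (t - j) := Cplus_antitone C (by lia)
  rw [X, map_betaRes_eq_top_iff, sup_left_comm, sup_eq_left.mpr hle]

lemma Y_eq_top_iff {i : ℤ} (hi : -1 ≤ i) (t : ℤ) :
    Y C i t = ⊤ ↔ Cminus C (t + i + 1) ⊔ Cplus C (t + 1) = ⊤ := by
  have hle : Cminus C t ≤ Cminus C (t + i + 1) := Cminus_monotone C (by lia)
  rw [Y, map_betaRes_eq_top_iff, ← sup_assoc, sup_eq_left.mpr hle]

lemma Cminus_sup_Cplus_eq_top_iff (s t : ℤ) :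
    Cminus C t ⊔ Cplus C s = ⊤ ↔ ∀ a b : C, ∃ c : C,
      (∀ n < s, (c : ∀ r, A r) n = (a : ∀ r, A r) n) ∧
      (∀ n, t ≤ n → (c : ∀ r, A r) n = (b : ∀ r, A r) n) := by
  constructor
  · intro htop a b
    have hmem : a * b⁻¹ ∈ Cminus C t ⊔ Cplus C s := htop ▸ Subgroup.mem_top _
    obtain ⟨u, hu, v, hv, huv⟩ := Subgroup.mem_sup_of_normal_left.mp hmem
    obtain rfl : a = u * v * b := eq_mul_of_mul_inv_eq huv.symm
    refine ⟨u * b, fun n hn => ?_, fun n hn => ?_⟩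
    · simp [hv n hn]
    · simp [hu n hn]
  · intro hsplice
    refine (Subgroup.eq_top_iff' _).mpr fun a => ?_
    obtain ⟨c, hca, hc⟩ := hsplice a 1
    have hv : c⁻¹ * a ∈ Cplus C s := fun n hn => by simp [hca n hn]
    exact mul_inv_cancel_left c a ▸ Subgroup.mul_mem_sup hc hv

lemma controllable_iff (ℓ : ℕ) :
    Controllable C ℓ ↔ ∀ t : ℤ, Cminus C (t + ℓ) ⊔ Cplus C t = ⊤ := by
  simp only [Cminus_sup_Cplus_eq_top_iff]
  exact ⟨fun h t a b => h a b t, fun h a b t => h t a b⟩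

end

/-- `C` is `ℓ`-controllable iff `X_ℓ^t = B^t` for every `t`, iff
`Y_ℓ^t = B^t` for every `t`. -/
theorem statement2 (C : Subgroup (∀ t, A t)) (ℓ : ℕ) :
    (Controllable C ℓ ↔ ∀ t : ℤ, X C (ℓ : ℤ) t = ⊤) ∧
    (Controllable C ℓ ↔ ∀ t : ℤ, Y C (ℓ : ℤ) t = ⊤) := by
  have hℓ : (-1 : ℤ) ≤ ℓ := by lia
  simp only [controllable_iff, X_eq_top_iff C hℓ, Y_eq_top_iff C hℓ]
  constructor
  · rw [← (Equiv.subRight (ℓ : ℤ)).forall_congr_right]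
    simp only [Equiv.subRight_apply, sub_add_cancel]
  · rw [← (Equiv.addRight (1 : ℤ)).forall_congr_right]
    simp only [Equiv.coe_addRight, add_right_comm]

end GroupSystemPaper
end

section
/- Let C be a group system, t ∈ ℤ, and k ≥ 1. Then C^{[t,t+k−1]}·C^{[t+1,t+k]} is a normal subgroup of C^{[t,t+k]}, χ^t(C^{[t,t+k−1]}) is a normal subgroup of χ^t(C^{[t,t+k]}), and the assignment a·(C^{[t,t+k−1]}C^{[t+1,t+k]}) ↦ χ^t(a)·χ^t(C^{[t,t+k−1]}) defines an isomorphism C^{[t,t+k]}/(C^{[t,t+k−1]}C^{[t+1,t+k]}) ≅ χ^t(C^{[t,t+k]})/χ^t(C^{[t,t+k−1]}). -/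
/-!
Restrict the evaluation `χ^t` to `C^{[t,t+k]}`. A codeword of `C^{[t,t+k]}` trivial at time `t`
belongs to `C^{[t+1,t+k]}`, so this is the kernel of the restriction, and the preimage of
`χ^t(C^{[t,t+k−1]})` is `C^{[t,t+k−1]}C^{[t+1,t+k]}`. The isomorphism is the one induced on
quotients by a surjection, when the subgroup divided out upstairs is a full preimage.
-/

open scoped Pointwise

namespace GroupSystemPaper

variable {A : ℤ → Type*} [∀ t, Group (A t)]

section Quotient

variable {G H : Type*} [Group G] [Group H] (f : G →* H)

/-- The isomorphism `G ⧸ M ≃* H ⧸ N` induced by a surjection `f : G →* H` for which `M` is the full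
preimage of `N`. The preimage enters as an equation, so that `M` may be given in another form. -/
noncomputable def quotientEquivOfComapEq {M : Subgroup G} {N : Subgroup H} [M.Normal] [N.Normal]
    (hf : Function.Surjective f) (h : N.comap f = M) : G ⧸ M ≃* H ⧸ N :=
  QuotientGroup.liftEquiv M (φ := (QuotientGroup.mk' N).comp f)
    ((QuotientGroup.mk'_surjective N).comp hf) <| by
      rw [← MonoidHom.comap_ker, QuotientGroup.ker_mk', h]

@[simp]
lemma quotientEquivOfComapEq_mk {M : Subgroup G} {N : Subgroup H} [M.Normal] [N.Normal]
    (hf : Function.Surjective f) (h : N.comap f = M) (g : G) :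
    quotientEquivOfComapEq f hf h (QuotientGroup.mk g) = QuotientGroup.mk (f g) :=
  rfl

variable {K M : Subgroup G}

lemma map_subgroupMap_subgroupOf (h : M ≤ K) :
    (M.subgroupOf K).map (f.subgroupMap K) = (M.map f).subgroupOf (K.map f) := by
  ext ⟨y, hy⟩
  constructor
  · rintro ⟨x, hx, hxy⟩
    exact ⟨x, hx, congrArg Subtype.val hxy⟩
  · rintro ⟨x, hx, hxy⟩
    exact ⟨⟨x, h hx⟩, hx, Subtype.ext hxy⟩

lemma normal_map_subgroupOf_map [(M.subgroupOf K).Normal] (h : M ≤ K) :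
    ((M.map f).subgroupOf (K.map f)).Normal := by
  rw [← map_subgroupMap_subgroupOf f h]
  exact Subgroup.Normal.map inferInstance _ (f.subgroupMap_surjective K)

lemma comap_subgroupMap_map_subgroupOf_map (h : M ≤ K) :
    ((M.map f).subgroupOf (K.map f)).comap (f.subgroupMap K) =
      (M ⊔ f.ker ⊓ K).subgroupOf K :=
  calc ((M.map f).subgroupOf (K.map f)).comap (f.subgroupMap K)
      = ((M.subgroupOf K).map (f.subgroupMap K)).comap (f.subgroupMap K) := by
        rw [map_subgroupMap_subgroupOf f h]
    _ = M.subgroupOf K ⊔ f.ker.subgroupOf K := by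
        rw [Subgroup.comap_map_eq, Subgroup.ker_subgroupMap]
    _ = (M ⊔ f.ker ⊓ K).subgroupOf K := by
        rw [Subgroup.subgroupOf_sup h inf_le_right, Subgroup.inf_subgroupOf_right]

end Quotient

section Interval

variable (C : Subgroup (∀ t, A t))

lemma Cint_mono_right (t : ℤ) {s₁ s₂ : ℤ} (h : s₁ ≤ s₂) : Cint C t s₁ ≤ Cint C t s₂ :=
  fun _ ha ↦ ⟨ha.1, fun n hn ↦ ha.2 n (by omega)⟩

lemma ker_evalHom_inf_Cint (t s : ℤ) : (evalHom C t).ker ⊓ Cint C t s = Cint C (t + 1) s := by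
  ext a
  constructor
  · rintro ⟨hat : (a : ∀ s, A s) t = 1, hbefore, hafter⟩
    refine ⟨fun n hn ↦ ?_, hafter⟩
    obtain hlt | rfl := (Int.lt_add_one_iff.mp hn).lt_or_eq
    exacts [hbefore n hlt, hat]
  · rintro ⟨hbefore, hafter⟩
    exact ⟨hbefore t (lt_add_one t), fun n hn ↦ hbefore n (hn.trans (lt_add_one t)), hafter⟩

lemma comap_evalHom_subgroupMap_Cint (t : ℤ) (k : ℕ) :
    (((Cint C t (t + k - 1)).map (evalHom C t)).subgroupOf
        ((Cint C t (t + k)).map (evalHom C t))).comap ((evalHom C t).subgroupMap _) =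
      (granN C t k).subgroupOf (Cint C t (t + k)) := by
  rw [comap_subgroupMap_map_subgroupOf_map _ (Cint_mono_right C t (sub_one_lt _).le),
    ker_evalHom_inf_Cint, granN]

end Interval

/-- `C^{[t,t+k−1]}C^{[t+1,t+k]}` is normal in `C^{[t,t+k]}`,
`χ^t(C^{[t,t+k−1]})` is normal in `χ^t(C^{[t,t+k]})`, and
`a·(C^{[t,t+k−1]}C^{[t+1,t+k]}) ↦ χ^t(a)·χ^t(C^{[t,t+k−1]})` defines an isomorphism
`C^{[t,t+k]}/(C^{[t,t+k−1]}C^{[t+1,t+k]}) ≅ χ^t(C^{[t,t+k]})/χ^t(C^{[t,t+k−1]})`. -/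
theorem statement8 (C : Subgroup (∀ t, A t)) (t : ℤ) (k : ℕ) (hk : 1 ≤ k) :
    ((granN C t k).subgroupOf (Cint C t (t + (k : ℤ)))).Normal ∧
    (((Cint C t (t + (k : ℤ) - 1)).map (evalHom C t)).subgroupOf
        ((Cint C t (t + (k : ℤ))).map (evalHom C t))).Normal ∧
    ∀ (hM : (((Cint C t (t + (k : ℤ) - 1)).map (evalHom C t)).subgroupOf
        ((Cint C t (t + (k : ℤ))).map (evalHom C t))).Normal),
      haveI := hM
      ∃ e : (↥(Cint C t (t + (k : ℤ))) ⧸ (granN C t k).subgroupOf (Cint C t (t + (k : ℤ)))) ≃*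
            (↥((Cint C t (t + (k : ℤ))).map (evalHom C t)) ⧸
              ((Cint C t (t + (k : ℤ) - 1)).map (evalHom C t)).subgroupOf
                ((Cint C t (t + (k : ℤ))).map (evalHom C t))),
        ∀ (a : ↥C) (ha : a ∈ Cint C t (t + (k : ℤ))),
          e (QuotientGroup.mk ⟨a, ha⟩) =
            QuotientGroup.mk ⟨evalHom C t a, Subgroup.mem_map_of_mem _ ha⟩ := by
  refine ⟨inferInstance, normal_map_subgroupOf_map _ (Cint_mono_right C t (sub_one_lt _).le),
    fun hM ↦ ⟨quotientEquivOfComapEq _ ((evalHom C t).subgroupMap_surjective _)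
      (comap_evalHom_subgroupMap_Cint C t k), fun a ha ↦ quotientEquivOfComapEq_mk _ _ _ _⟩⟩

end GroupSystemPaper
end

section
/- Let C be a group system, t ∈ ℤ, and k ≥ 1. Then χ^t(C^{[t,t+k−1]}) is normal in χ^t(C^{[t,t+k]}), χ^{t+k}(C^{[t+1,t+k]}) is normal in χ^{t+k}(C^{[t,t+k]}), and there is an isomorphism of quotient groups χ^t(C^{[t,t+k]})/χ^t(C^{[t,t+k−1]}) ≅ χ^{t+k}(C^{[t,t+k]})/χ^{t+k}(C^{[t+1,t+k]}); in particular these two quotients have the same cardinality. -/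
open scoped Pointwise

namespace GroupSystemPaper

variable {A : ℤ → Type*} [∀ t, Group (A t)]

/-!
Restricted to `C^{[t,t+k]}`, the evaluation `χ^t` has kernel `C^{[t+1,t+k]}` and `χ^{t+k}` has
kernel `C^{[t,t+k−1]}`, so each image is divided by the image of the kernel of the other map. As in
Goursat's lemma, for surjections `f` and `g` out of one group `G` both such quotients are
`G / (ker f · ker g)`: here, the granule `C^{[t,t+k]} / (C^{[t,t+k−1]}C^{[t+1,t+k]})`.
-/

section Goursat

variable {G M N : Type*} [Group G] [Group M] [Group N]

/-- The isomorphism `G / f⁻¹(K) ≃ M / K` induced by a surjective homomorphism `f : G → M`. -/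
noncomputable def quotientComapEquivOfSurjective (f : G →* M) (hf : Function.Surjective f)
    (K : Subgroup M) [K.Normal] : G ⧸ K.comap f ≃* M ⧸ K :=
  (QuotientGroup.quotientMulEquivOfEq (by rw [← MonoidHom.comap_ker, QuotientGroup.ker_mk'])).trans
    (QuotientGroup.quotientKerEquivOfSurjective ((QuotientGroup.mk' K).comp f)
      ((QuotientGroup.mk'_surjective K).comp hf))

lemma comap_map_ker_comm (f : G →* M) (g : G →* N) :
    (g.ker.map f).comap f = (f.ker.map g).comap g := by
  rw [Subgroup.comap_map_eq, Subgroup.comap_map_eq, sup_comm]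

/-- The Goursat isomorphism `M / f(ker g) ≃ N / g(ker f)` of two surjective homomorphisms
`f : G → M` and `g : G → N`, obtained by pulling both quotients back to `G`. -/
noncomputable def quotientMapKerEquiv (f : G →* M) (g : G →* N) (hf : Function.Surjective f)
    (hg : Function.Surjective g) [(g.ker.map f).Normal] [(f.ker.map g).Normal] :
    M ⧸ g.ker.map f ≃* N ⧸ f.ker.map g :=
  (quotientComapEquivOfSurjective f hf _).symm.trans <|
    (QuotientGroup.quotientMulEquivOfEq (comap_map_ker_comm f g)).trans
      (quotientComapEquivOfSurjective g hg _)

lemma map_subgroupOf_map (f : G →* M) {K H : Subgroup G} (hKH : K ≤ H) :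
    (K.map f).subgroupOf (H.map f) = (K.subgroupOf H).map (f.subgroupMap H) := by
  ext ⟨_, c, hc, rfl⟩
  constructor
  · rintro ⟨b, hb, hbc⟩
    exact ⟨⟨b, hKH hb⟩, hb, Subtype.ext hbc⟩
  · rintro ⟨b, hb, hbc⟩
    exact ⟨b, hb, congrArg Subtype.val hbc⟩

lemma map_ker_inf_subgroupOf_map (f : G →* M) (g : G →* N) (H : Subgroup G) :
    ((g.ker ⊓ H).map f).subgroupOf (H.map f) =
      (g.subgroupMap H).ker.map (f.subgroupMap H) := by
  rw [map_subgroupOf_map f inf_le_right, Subgroup.inf_subgroupOf_right, Subgroup.ker_subgroupMap]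

end Goursat

section Kernels

variable (C : Subgroup (∀ t, A t)) (t t₁ t₂ : ℤ)

lemma ker_evalHom_inf_Cplus : (evalHom C t).ker ⊓ Cplus C t = Cplus C (t + 1) := by
  ext a
  change (a : ∀ s, A s) t = 1 ∧ (∀ n < t, (a : ∀ s, A s) n = 1) ↔
    ∀ n < t + 1, (a : ∀ s, A s) n = 1
  simp only [Int.lt_add_one_iff, le_iff_eq_or_lt, forall_eq_or_imp]

lemma ker_evalHom_inf_Cminus : (evalHom C t).ker ⊓ Cminus C (t + 1) = Cminus C t := by
  ext a
  change (a : ∀ s, A s) t = 1 ∧ (∀ n, t < n → (a : ∀ s, A s) n = 1) ↔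
    ∀ n, t ≤ n → (a : ∀ s, A s) n = 1
  simp only [le_iff_eq_or_lt, or_imp, forall_and, forall_eq']

lemma ker_evalHom_left_inf_Cint :
    (evalHom C t₁).ker ⊓ Cint C t₁ t₂ = Cint C (t₁ + 1) t₂ := by
  rw [Cint, ← inf_assoc, ker_evalHom_inf_Cplus, Cint]

lemma ker_evalHom_right_inf_Cint :
    (evalHom C t₂).ker ⊓ Cint C t₁ t₂ = Cint C t₁ (t₂ - 1) := by
  rw [Cint, inf_left_comm, ker_evalHom_inf_Cminus, Cint, sub_add_cancel]

end Kernels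

/-- `χ^t(C^{[t,t+k−1]})` is normal in `χ^t(C^{[t,t+k]})`,
`χ^{t+k}(C^{[t+1,t+k]})` is normal in `χ^{t+k}(C^{[t,t+k]})`, and
`χ^t(C^{[t,t+k]})/χ^t(C^{[t,t+k−1]}) ≅ χ^{t+k}(C^{[t,t+k]})/χ^{t+k}(C^{[t+1,t+k]})`;
in particular these two quotients have the same cardinality. -/
theorem statement9 (C : Subgroup (∀ t, A t)) (t : ℤ) (k : ℕ) (hk : 1 ≤ k) :
    (((Cint C t (t + (k : ℤ) - 1)).map (evalHom C t)).subgroupOf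
        ((Cint C t (t + (k : ℤ))).map (evalHom C t))).Normal ∧
    (((Cint C (t + 1) (t + (k : ℤ))).map (evalHom C (t + (k : ℤ)))).subgroupOf
        ((Cint C t (t + (k : ℤ))).map (evalHom C (t + (k : ℤ))))).Normal ∧
    (∀ (h1 : (((Cint C t (t + (k : ℤ) - 1)).map (evalHom C t)).subgroupOf
          ((Cint C t (t + (k : ℤ))).map (evalHom C t))).Normal)
       (h2 : (((Cint C (t + 1) (t + (k : ℤ))).map (evalHom C (t + (k : ℤ)))).subgroupOf
          ((Cint C t (t + (k : ℤ))).map (evalHom C (t + (k : ℤ))))).Normal),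
      haveI := h1
      haveI := h2
      Nonempty
        ((↥((Cint C t (t + (k : ℤ))).map (evalHom C t)) ⧸
            ((Cint C t (t + (k : ℤ) - 1)).map (evalHom C t)).subgroupOf
              ((Cint C t (t + (k : ℤ))).map (evalHom C t))) ≃*
         (↥((Cint C t (t + (k : ℤ))).map (evalHom C (t + (k : ℤ)))) ⧸
            ((Cint C (t + 1) (t + (k : ℤ))).map (evalHom C (t + (k : ℤ)))).subgroupOf
              ((Cint C t (t + (k : ℤ))).map (evalHom C (t + (k : ℤ))))))) ∧
    Nat.card
        (↥((Cint C t (t + (k : ℤ))).map (evalHom C t)) ⧸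
          ((Cint C t (t + (k : ℤ) - 1)).map (evalHom C t)).subgroupOf
            ((Cint C t (t + (k : ℤ))).map (evalHom C t))) =
      Nat.card
        (↥((Cint C t (t + (k : ℤ))).map (evalHom C (t + (k : ℤ)))) ⧸
          ((Cint C (t + 1) (t + (k : ℤ))).map (evalHom C (t + (k : ℤ)))).subgroupOf
            ((Cint C t (t + (k : ℤ))).map (evalHom C (t + (k : ℤ))))) := by
  rw [← ker_evalHom_right_inf_Cint, ← ker_evalHom_left_inf_Cint,
    map_ker_inf_subgroupOf_map, map_ker_inf_subgroupOf_map]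
  have hleft := (evalHom C t).subgroupMap_surjective (Cint C t (t + k))
  have hright := (evalHom C (t + k)).subgroupMap_surjective (Cint C t (t + k))
  have h1 := (MonoidHom.normal_ker ((evalHom C (t + k)).subgroupMap _)).map _ hleft
  have h2 := (MonoidHom.normal_ker ((evalHom C t).subgroupMap _)).map _ hright
  exact ⟨h1, h2, fun _ _ => ⟨quotientMapKerEquiv _ _ hleft hright⟩,
    Nat.card_congr (quotientMapKerEquiv _ _ hleft hright).toEquiv⟩

end GroupSystemPaper
end

section
/- Let C be a group system, t ∈ ℤ, and k ≥ 1. Then for every j with 0 ≤ j ≤ k: π^{[t,t+k]}(D_{k−1}^t) is a normal subgroup of π^{[t,t+k]}(D_k^t), β^{t+j}(D_{k−1}^t) is a normal subgroup of β^{t+j}(D_k^t), and the projection onto the (t+j)-th component induces an isomorphism π^{[t,t+k]}(D_k^t)/π^{[t,t+k]}(D_{k−1}^t) ≅ β^{t+j}(D_k^t)/β^{t+j}(D_{k−1}^t). -/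
open scoped Pointwise

namespace GroupSystemPaper

variable {A : ℤ → Type*} [∀ t, Group (A t)]

/-!
A homomorphism `f` induces `M / N ≃ f(M) / f(N)` as soon as `M ∩ ker f ≤ N`, so `D_n^t / D_m^t` can
be compared with both of its images. The kernel of `β^s` is `C^{s-} C^{(s+1)+}`, whence
`D_m^t = C^{t-} C^{t+} ∩ C^{(t+m+1)-} C^{(t+1)+}` for `m ≥ -1`. If `t ≤ s ≤ t + m + 1`, the second
factor contains `ker β^s`, and the first does not depend on `m`; hence `D_n^t ∩ ker β^s ≤ D_m^t`,
and the same holds for the smaller kernel of `π^{[t,t+k]}` when `s ≤ t + k`.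
-/

section ImageQuotient

variable {G H K : Type*} [Group G] [Group H] [Group K] (f : G →* H) (g : G →* K)

instance normal_map_subgroupOf_map_s13 (M N : Subgroup G) [N.Normal] :
    ((N.map f).subgroupOf (M.map f)).Normal :=
  Subgroup.normal_subgroupOf_of_le_normalizer
    ((Subgroup.map_mono Subgroup.le_normalizer_of_normal).trans (N.le_normalizer_map f))

variable {M N : Subgroup G} [N.Normal]

lemma ker_mk'_comp_subgroupMap (hNM : N ≤ M) (hf : M ⊓ f.ker ≤ N) :
    ((QuotientGroup.mk' ((N.map f).subgroupOf (M.map f))).comp (f.subgroupMap M)).ker =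
      N.subgroupOf M := by
  rw [← MonoidHom.comap_ker, QuotientGroup.ker_mk']
  ext ⟨a, ha⟩
  change f a ∈ N.map f ↔ a ∈ N
  refine ⟨fun ⟨b, hb, hfb⟩ => ?_, Subgroup.mem_map_of_mem f⟩
  have hba : b⁻¹ * a ∈ N := hf ⟨M.mul_mem (M.inv_mem (hNM hb)) ha, f.eq_iff.1 hfb.symm⟩
  exact (N.mul_mem_cancel_left (N.inv_mem hb)).1 hba

variable (hNM : N ≤ M) (hf : M ⊓ f.ker ≤ N) (hg : M ⊓ g.ker ≤ N)

/-- The isomorphism `M / N ≃ f(M) / f(N)` induced by a homomorphism `f` whose kernel meets `M`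
inside `N`. -/
noncomputable def quotientEquivQuotientMap :
    ↥M ⧸ N.subgroupOf M ≃* ↥(M.map f) ⧸ (N.map f).subgroupOf (M.map f) :=
  QuotientGroup.liftEquiv (N.subgroupOf M)
    ((QuotientGroup.mk'_surjective _).comp (f.subgroupMap_surjective M))
    (ker_mk'_comp_subgroupMap f hNM hf).symm

lemma quotientEquivQuotientMap_mk {a : G} (ha : a ∈ M) :
    quotientEquivQuotientMap f hNM hf (QuotientGroup.mk ⟨a, ha⟩) =
      QuotientGroup.mk ⟨f a, Subgroup.mem_map_of_mem f ha⟩ :=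
  rfl

/-- The isomorphism `f(M) / f(N) ≃ g(M) / g(N)`, `f(a) ↦ g(a)`, between the images of `M / N`
under two homomorphisms whose kernels meet `M` inside `N`. -/
noncomputable def quotientMapEquivQuotientMap :
    ↥(M.map f) ⧸ (N.map f).subgroupOf (M.map f) ≃* ↥(M.map g) ⧸ (N.map g).subgroupOf (M.map g) :=
  (quotientEquivQuotientMap f hNM hf).symm.trans (quotientEquivQuotientMap g hNM hg)

lemma quotientMapEquivQuotientMap_mk {a : G} (ha : a ∈ M) :
    quotientMapEquivQuotientMap f g hNM hf hg
        (QuotientGroup.mk ⟨f a, Subgroup.mem_map_of_mem f ha⟩) =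
      QuotientGroup.mk ⟨g a, Subgroup.mem_map_of_mem g ha⟩ := by
  rw [quotientMapEquivQuotientMap, MulEquiv.trans_apply, ← quotientEquivQuotientMap_mk f hNM hf ha,
    MulEquiv.symm_apply_apply, quotientEquivQuotientMap_mk]

end ImageQuotient

section GroupSystem

variable (C : Subgroup (∀ t, A t))

lemma mem_ker_betaRes {t : ℤ} {a : ↥C} :
    a ∈ (betaRes C t).ker ↔
      a ∈ stateN C t ∧ (a : ∀ s, A s) t = 1 ∧ a ∈ stateN C (t + 1) := by
  have hker : (betaRes C t).ker = (beta C t).ker := MonoidHom.ker_rangeRestrict _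
  rw [hker, beta, MonoidHom.ker_prod, MonoidHom.ker_prod, sigma, sigma, QuotientGroup.ker_mk',
    QuotientGroup.ker_mk']
  rfl

lemma ker_piSeg_le_ker_betaRes (t : ℤ) {k j : ℕ} (hj : j ≤ k) :
    (piSeg C t k).ker ≤ (betaRes C (t + j)).ker :=
  fun _ ha => congrFun ha ⟨j, Nat.lt_succ_of_le hj⟩

lemma comap_betaRes_X_zero (t : ℤ) : (X C 0 t).comap (betaRes C t) = stateN C t := by
  rw [X, Subgroup.comap_map_eq, ker_betaRes, sub_zero, sup_left_comm,
    sup_eq_left.2 (Cplus_antitone C (Int.le_add_one le_rfl)), stateN]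

lemma comap_betaRes_Y (t : ℤ) {m : ℤ} (hm : -1 ≤ m) :
    (Y C m t).comap (betaRes C t) = Cminus C (t + m + 1) ⊔ Cplus C (t + 1) := by
  rw [Y, Subgroup.comap_map_eq, ker_betaRes, ← sup_assoc,
    sup_eq_left.2 (Cminus_monotone C (by lia))]

lemma D_le_stateN (m t : ℤ) : D C m t ≤ stateN C t :=
  (Subgroup.comap_mono inf_le_left).trans_eq (comap_betaRes_X_zero C t)

lemma D_eq_stateN_inf (t : ℤ) {m : ℤ} (hm : -1 ≤ m) :
    D C m t = stateN C t ⊓ (Cminus C (t + m + 1) ⊔ Cplus C (t + 1)) := by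
  rw [D, Del, Subgroup.comap_inf, comap_betaRes_X_zero, comap_betaRes_Y C t hm]

lemma D_mono (t : ℤ) {m n : ℤ} (hmn : m ≤ n) : D C m t ≤ D C n t :=
  Subgroup.comap_mono
    (inf_le_inf_left _ (Subgroup.map_mono (Cminus_monotone C (by lia))))

instance D_normal (m t : ℤ) : (D C m t).Normal :=
  (Subgroup.normal_inf_normal (X C 0 t) (Y C m t)).comap _

lemma D_inf_ker_betaRes_le (n : ℤ) {s t m : ℤ} (hts : t ≤ s) (hst : s ≤ t + m + 1) :
    D C n t ⊓ (betaRes C s).ker ≤ D C m t := by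
  rw [D_eq_stateN_inf C t (by lia : -1 ≤ m), ker_betaRes]
  exact inf_le_inf (D_le_stateN C n t)
    (sup_le_sup (Cminus_monotone C hst) (Cplus_antitone C (by lia)))

instance Pseg_subgroupOf_normal (t : ℤ) (k : ℕ) (m n : ℤ) :
    ((Pseg C t k m).subgroupOf (Pseg C t k n)).Normal :=
  normal_map_subgroupOf_map_s13 (piSeg C t k) (D C n t) (D C m t)

instance Qb_subgroupOf_normal (t m n j : ℤ) :
    ((Qb C t m j).subgroupOf (Qb C t n j)).Normal :=
  normal_map_subgroupOf_map_s13 (betaRes C (t + j)) (D C n t) (D C m t)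

end GroupSystem

theorem statement13_general (C : Subgroup (∀ t, A t)) (t : ℤ) {k j : ℕ} {m n : ℤ}
    (hjk : j ≤ k) (hjm : j ≤ m + 1) (hmn : m ≤ n) :
    ∃ e : (↥(Pseg C t k n) ⧸ (Pseg C t k m).subgroupOf (Pseg C t k n)) ≃*
          (↥(Qb C t n j) ⧸ (Qb C t m j).subgroupOf (Qb C t n j)),
      ∀ (a : ↥C) (ha : a ∈ D C n t),
        e (QuotientGroup.mk ⟨piSeg C t k a, Subgroup.mem_map_of_mem _ ha⟩) =
          QuotientGroup.mk ⟨betaRes C (t + j) a, Subgroup.mem_map_of_mem _ ha⟩ := by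
  have hDm : D C m t ≤ D C n t := D_mono C t hmn
  have hbeta : D C n t ⊓ (betaRes C (t + j)).ker ≤ D C m t :=
    D_inf_ker_betaRes_le C n (by lia) (by lia)
  have hpi : D C n t ⊓ (piSeg C t k).ker ≤ D C m t :=
    (inf_le_inf_left _ (ker_piSeg_le_ker_betaRes C t hjk)).trans hbeta
  exact ⟨quotientMapEquivQuotientMap (piSeg C t k) (betaRes C (t + j)) hDm hpi hbeta,
    fun _ ha => quotientMapEquivQuotientMap_mk _ _ hDm hpi hbeta ha⟩

/-- For `k ≥ 1` and `0 ≤ j ≤ k`: `π^{[t,t+k]}(D_{k−1}^t)` is normal in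
`π^{[t,t+k]}(D_k^t)`, `β^{t+j}(D_{k−1}^t)` is normal in `β^{t+j}(D_k^t)`, and projection
onto the `(t+j)`-th component induces an isomorphism
`π^{[t,t+k]}(D_k^t)/π^{[t,t+k]}(D_{k−1}^t) ≅ β^{t+j}(D_k^t)/β^{t+j}(D_{k−1}^t)`. -/
theorem statement13 (C : Subgroup (∀ t, A t)) (t : ℤ) (k : ℕ) (hk : 1 ≤ k)
    (j : ℕ) (hj : j ≤ k) :
    ((Pseg C t k ((k : ℤ) - 1)).subgroupOf (Pseg C t k (k : ℤ))).Normal ∧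
    ((Qb C t ((k : ℤ) - 1) (j : ℤ)).subgroupOf (Qb C t (k : ℤ) (j : ℤ))).Normal ∧
    ∀ (h1 : ((Pseg C t k ((k : ℤ) - 1)).subgroupOf (Pseg C t k (k : ℤ))).Normal)
      (h2 : ((Qb C t ((k : ℤ) - 1) (j : ℤ)).subgroupOf (Qb C t (k : ℤ) (j : ℤ))).Normal),
      haveI := h1
      haveI := h2
      ∃ e : (↥(Pseg C t k (k : ℤ)) ⧸
               (Pseg C t k ((k : ℤ) - 1)).subgroupOf (Pseg C t k (k : ℤ))) ≃*
            (↥(Qb C t (k : ℤ) (j : ℤ)) ⧸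
               (Qb C t ((k : ℤ) - 1) (j : ℤ)).subgroupOf (Qb C t (k : ℤ) (j : ℤ))),
        ∀ (a : ↥C) (ha : a ∈ D C (k : ℤ) t),
          e (QuotientGroup.mk ⟨piSeg C t k a, Subgroup.mem_map_of_mem _ ha⟩) =
            QuotientGroup.mk ⟨betaRes C (t + (j : ℤ)) a, Subgroup.mem_map_of_mem _ ha⟩ := by
  exact ⟨inferInstance, inferInstance, fun _ _ =>
    statement13_general C t hj (by lia) (by lia)⟩

end GroupSystemPaper
end
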